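/- Let k ≥ 3, 1 ≤ ℓ ≤ k−1, a ≥ 1, 0 ≤ x ≤ k be integers, and set b = 2x + ℓ + (k−ℓ)a. Suppose 0 < ε ≤ ℓ/(3a) and 1/n ≪ 1/C ≪ γ, 1/a, 1/k. Let G = 𝔾^{(k)}(n,p) with p ≥ n^{−(k−ℓ)−ε} if ℓ ≥ 2 and p ≥ C·n^{−(k−1)} if ℓ = 1. Then with probability 1 − o(1), G contains at most 4·b²·n^{2b−1}·p^{2a} pairs of overlapping (i.e., not vertex-disjoint) labeled copies of P_{a,x}. -/

import Mathlib

open Finset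
open scoped Classical

/-- All `k`-subsets of `Fin n` (the possible edges of a `k`-graph on `n` vertices). -/
def kSets (n k : ℕ) : Finset (Finset (Fin n)) := Finset.univ.powersetCard k

/-- The probability that the binomial random `k`-graph `G^{(k)}(n,p)` (each `k`-set is an
edge independently with probability `p`) has an edge set satisfying the property `A`. -/
noncomputable def gProb (n k : ℕ) (p : ℝ) (A : Finset (Finset (Fin n)) → Prop) : ℝ :=
  ∑ E ∈ (kSets n k).powerset.filter (fun E => A E),
    p ^ E.card * (1 - p) ^ ((kSets n k).card - E.card)

/-- Expectation of a random variable `f` of the random `k`-graph `G^{(k)}(n,p)`. -/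
noncomputable def gExpect (n k : ℕ) (p : ℝ) (f : Finset (Finset (Fin n)) → ℝ) : ℝ :=
  ∑ E ∈ (kSets n k).powerset,
    p ^ E.card * (1 - p) ^ ((kSets n k).card - E.card) * f E

/-- The degree of a vertex set `S` in the `k`-graph with edge set `E`: the number of edges
containing `S` (equivalently, the number of `(k-|S|)`-sets `T` with `S ∪ T ∈ E`). -/
def degOf {n : ℕ} (E : Finset (Finset (Fin n))) (S : Finset (Fin n)) : ℕ :=
  (E.filter (fun e => S ⊆ e)).card

/-- The minimum vertex degree (minimum 1-degree) of a `k`-graph. -/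
noncomputable def minVertexDeg {n : ℕ} (E : Finset (Finset (Fin n))) : ℕ :=
  sInf {d : ℕ | ∃ v : Fin n, degOf E {v} = d}

/-- The index set of the `i`-th edge of the path `P_{a,x}`:
`{x + i*d, x + i*d + 1, …, x + i*d + k - 1}` (here `d = k - ℓ`). -/
def edgeIdx (k d x i : ℕ) : Finset ℕ := (Finset.range k).image (fun j => x + i * d + j)

/-- The ordered `b`-tuple `w` spans a labeled copy of `P_{a,x}` (the `k`-uniform `ℓ`-path
with `a` edges, preceded and followed by `x` isolated vertices) in the edge set `E`. -/
def SpansPax {n : ℕ} (k ℓ a x : ℕ) (E : Finset (Finset (Fin n))) {b : ℕ}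
    (w : Fin b → Fin n) : Prop :=
  Function.Injective w ∧
  ∀ i < a,
    ((Finset.univ.filter (fun m : Fin b => (m : ℕ) ∈ edgeIdx k (k - ℓ) x i)).image w) ∈ E

/-- The ordered tuple `w` spans a labeled copy of the `ℓ`-path `P_a` of length `a` in `E`. -/
def SpansPath {n : ℕ} (k ℓ a : ℕ) (E : Finset (Finset (Fin n))) {b : ℕ}
    (w : Fin b → Fin n) : Prop :=
  SpansPax k ℓ a 0 E w

/-- The first `ℓ`-end of the ordered tuple `w` (its first `ℓ` vertices, as a set). -/
def firstEnd {n b : ℕ} (ℓ : ℕ) (w : Fin b → Fin n) : Finset (Fin n) :=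
  (Finset.univ.filter (fun m : Fin b => (m : ℕ) < ℓ)).image w

/-- The last `ℓ`-end of the ordered tuple `w` (its last `ℓ` vertices, as a set). -/
def lastEnd {n b : ℕ} (ℓ : ℕ) (w : Fin b → Fin n) : Finset (Fin n) :=
  (Finset.univ.filter (fun m : Fin b => b - ℓ ≤ (m : ℕ))).image w

/-- The `k`-graph with edge set `E` on vertex set `Fin n` contains a Hamiltonian `ℓ`-cycle:
there is a cyclic ordering of all `n` vertices such that each of the `n/(k-ℓ)` edges
consists of `k` consecutive vertices, consecutive edges overlapping in `ℓ` vertices. -/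
def IsHamCycle (n k ℓ : ℕ) (E : Finset (Finset (Fin n))) : Prop :=
  ∃ f : ZMod n → Fin n, Function.Bijective f ∧
    ∀ i < n / (k - ℓ),
      ((Finset.range k).image (fun j => f (((i * (k - ℓ) + j : ℕ) : ZMod n)))) ∈ E

/-- The `ℓ`-shadow of a `k`-graph: all `ℓ`-sets contained in some edge. -/
def shadowL {n : ℕ} (ℓ : ℕ) (E : Finset (Finset (Fin n))) : Finset (Finset (Fin n)) :=
  (Finset.univ.powersetCard ℓ).filter (fun S => ∃ e ∈ E, S ⊆ e)

/-- The list `v` of vertices spans a copy of the `ℓ`-path `P_a` of length `a` in `E`. -/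
def ListSpans {n : ℕ} (k ℓ a : ℕ) (E : Finset (Finset (Fin n))) (v : List (Fin n)) : Prop :=
  v.Nodup ∧ v.length = a * (k - ℓ) + ℓ ∧
    ∀ i < a, ((v.drop (i * (k - ℓ))).take k).toFinset ∈ E

/-- `Φ_F(n,p) = min { n^{v_H} p^{e_H} : H ⊆ F, e_H > 0 }`, where the subgraph `H` is given
by a nonempty edge set `E' ⊆ F` together with a vertex set `W` containing all its edges. -/
noncomputable def Phi {V : Type*} (n : ℕ) (p : ℝ) (F : Finset (Finset V)) : ℝ :=
  sInf {r : ℝ | ∃ (W : Finset V) (E' : Finset (Finset V)),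
    E' ⊆ F ∧ E'.Nonempty ∧ (∀ e ∈ E', e ⊆ W) ∧ r = (n : ℝ) ^ W.card * p ^ E'.card}

/-- The ordered tuple `w` spans a labeled copy of the `k`-graph `F` (given by its edge set
`Fe` on vertex set `Fin s`) in the edge set `E`. -/
def SpansCopy {n s : ℕ} (Fe : Finset (Finset (Fin s))) (E : Finset (Finset (Fin n)))
    (w : Fin s → Fin n) : Prop :=
  ∀ e ∈ Fe, e.image w ∈ E

/-- Concatenation of three ordered tuples. -/
def concat3 {n p q r : ℕ} (A : Fin p → Fin n) (C : Fin q → Fin n) (B : Fin r → Fin n)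
    (m : Fin (p + q + r)) : Fin n :=
  if h : (m : ℕ) < p then A ⟨(m : ℕ), h⟩
  else if h2 : (m : ℕ) < p + q then C ⟨(m : ℕ) - p, by omega⟩
  else B ⟨(m : ℕ) - (p + q), by have := m.isLt; omega⟩

/-- `w`, spanning an `ℓ`-path of length `a`, is a `W`-absorber in `E`: it avoids `W`, and
its vertex set together with `W` spans an `ℓ`-path (of length `a+1` when `|W| = k - ℓ`)
with the same two `ℓ`-ends. -/
def IsAbsorber {n : ℕ} (k ℓ a : ℕ) (E : Finset (Finset (Fin n))) {b : ℕ}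
    (w : Fin b → Fin n) (W : Finset (Fin n)) : Prop :=
  (∀ m, w m ∉ W) ∧
  ∃ w' : Fin (b + W.card) → Fin n, SpansPath k ℓ (a + 1) E w' ∧
    Finset.image w' Finset.univ = Finset.image w Finset.univ ∪ W ∧
    firstEnd ℓ w' = firstEnd ℓ w ∧ lastEnd ℓ w' = lastEnd ℓ w


/-- The number of ordered pairs of overlapping (sharing a vertex) labeled copies of
`P_{a,x}` in `E`. -/
noncomputable def paxOverlapPairCount (n k ℓ a x b : ℕ) (E : Finset (Finset (Fin n))) : ℕ :=
  (Finset.univ.filter (fun ww : (Fin b → Fin n) × (Fin b → Fin n) =>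
    SpansPax k ℓ a x E ww.1 ∧ SpansPax k ℓ a x E ww.2 ∧
    ∃ m m' : Fin b, ww.1 m = ww.2 m')).card

/-! ### Finite probability -/

/-- Weight of the edge set `E` in the binomial model on ground set `K`. -/
noncomputable def bw {α : Type*} (K : Finset α) (p : ℝ) (E : Finset α) : ℝ :=
  p ^ E.card * (1 - p) ^ (K.card - E.card)

lemma bw_nonneg {α : Type*} (K : Finset α) (p : ℝ) (h0 : 0 ≤ p) (h1 : p ≤ 1) (E : Finset α) :
    0 ≤ bw K p E :=
  mul_nonneg (pow_nonneg h0 _) (pow_nonneg (by linarith) _)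

lemma bw_sum {α : Type*} [DecidableEq α] (K : Finset α) (p : ℝ) : ∑ E ∈ K.powerset, bw K p E = 1 := by
  unfold bw
  rw [Finset.sum_pow_mul_eq_add_pow]
  simp

lemma bw_sum_superset {α : Type*} [DecidableEq α] (K S : Finset α) (p : ℝ) (hS : S ⊆ K) :
    ∑ E ∈ K.powerset, bw K p E * (if S ⊆ E then 1 else 0) = p ^ S.card := by
  have h1 : ∑ E ∈ K.powerset, bw K p E * (if S ⊆ E then (1:ℝ) else 0)
      = ∑ E ∈ K.powerset.filter (fun E => S ⊆ E), bw K p E := by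
    rw [Finset.sum_filter]
    exact Finset.sum_congr rfl (fun E _ => by split_ifs <;> simp)
  rw [h1]
  have h2 : ∑ E ∈ K.powerset.filter (fun E => S ⊆ E), bw K p E
      = ∑ T ∈ (K \ S).powerset, p ^ S.card * bw (K \ S) p T := by
    refine Finset.sum_bij' (fun E _ => E \ S) (fun T _ => T ∪ S) ?_ ?_ ?_ ?_ ?_
    · intro E hE
      simp only [Finset.mem_filter, Finset.mem_powerset] at hE ⊢
      exact Finset.sdiff_subset_sdiff hE.1 (Finset.Subset.refl _)
    · intro T hT
      simp only [Finset.mem_filter, Finset.mem_powerset] at hT ⊢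
      exact ⟨Finset.union_subset (hT.trans Finset.sdiff_subset) hS, Finset.subset_union_right⟩
    · intro E hE
      simp only [Finset.mem_filter, Finset.mem_powerset] at hE
      exact Finset.sdiff_union_of_subset hE.2
    · intro T hT
      simp only [Finset.mem_powerset] at hT
      ext y
      have := @hT y
      simp only [Finset.mem_sdiff, Finset.mem_union] at this ⊢
      tauto
    · intro E hE
      simp only [Finset.mem_filter, Finset.mem_powerset] at hE
      have e1 := Finset.card_sdiff_add_card_eq_card hE.2
      have e2 := Finset.card_sdiff_add_card_eq_card hS
      have e3 := Finset.card_le_card hE.1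
      unfold bw
      rw [← mul_assoc, ← pow_add]
      congr 2 <;> omega
  rw [h2, ← Finset.mul_sum, bw_sum, mul_one]

lemma bw_sum_superset_not {α : Type*} [DecidableEq α] (K S : Finset α) (p : ℝ) (hS : ¬ S ⊆ K) :
    ∑ E ∈ K.powerset, bw K p E * (if S ⊆ E then 1 else 0) = 0 := by
  refine Finset.sum_eq_zero (fun E hE => ?_)
  rw [if_neg, mul_zero]
  exact fun h => hS (h.trans (Finset.mem_powerset.1 hE))

lemma bw_sum_superset_le {α : Type*} [DecidableEq α] (K S : Finset α) (p : ℝ) (h0 : 0 ≤ p) :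
    ∑ E ∈ K.powerset, bw K p E * (if S ⊆ E then 1 else 0) ≤ p ^ S.card := by
  by_cases hS : S ⊆ K
  · exact (bw_sum_superset K S p hS).le
  · rw [bw_sum_superset_not K S p hS]; positivity

/-- Second moment method for counts of the form `X(E) = #{i ∈ s : S i ⊆ E}`. -/
lemma second_moment {α ι : Type*} [DecidableEq α] (K : Finset α) (p : ℝ) (h0 : 0 ≤ p) (h1 : p ≤ 1)
    (s : Finset ι) (S : ι → Finset α) (m V δ : ℝ) (hm : 0 < m)
    (hmean : ∑ i ∈ s, p ^ (S i).card ≤ m)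
    (hvar : ∑ i ∈ s, ∑ j ∈ s,
      (if Disjoint (S i) (S j) then 0 else p ^ (S i ∪ S j).card) ≤ V)
    (hV : V ≤ δ * m ^ 2) :
    1 - δ ≤ ∑ E ∈ K.powerset.filter
      (fun E => ((s.filter (fun i => S i ⊆ E)).card : ℝ) ≤ 2 * m), bw K p E := by
  set ind : Finset α → Finset α → ℝ := fun T E => if T ⊆ E then 1 else 0 with hind
  set P : Finset α → ℝ := fun T => ∑ E ∈ K.powerset, bw K p E * ind T E with hP
  set X : Finset α → ℝ := fun E => ∑ i ∈ s, ind (S i) E with hX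
  have hXc : ∀ E, ((s.filter (fun i => S i ⊆ E)).card : ℝ) = X E := by
    intro E; simp [hX, hind]
  simp only [hXc]
  set μ := ∑ i ∈ s, P (S i) with hμ
  have hμm : μ ≤ m := by
    refine le_trans (Finset.sum_le_sum fun i _ => ?_) hmean
    exact bw_sum_superset_le K (S i) p h0
  have hEX : ∑ E ∈ K.powerset, bw K p E * X E = μ := by
    simp only [hX, hμ, hP, Finset.mul_sum]
    rw [Finset.sum_comm]
  have hmul : ∀ T T' E, ind T E * ind T' E = ind (T ∪ T') E := by
    intro T T' E
    simp only [hind, Finset.union_subset_iff]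
    by_cases h : T ⊆ E <;> by_cases h' : T' ⊆ E <;> simp [h, h']
  have hEX2 : ∑ E ∈ K.powerset, bw K p E * (X E) ^ 2 = ∑ i ∈ s, ∑ j ∈ s, P (S i ∪ S j) := by
    have : ∀ E, bw K p E * (X E) ^ 2 = ∑ i ∈ s, ∑ j ∈ s, bw K p E * ind (S i ∪ S j) E := by
      intro E
      rw [sq, hX, Finset.sum_mul_sum, Finset.mul_sum]
      refine Finset.sum_congr rfl fun i _ => ?_
      rw [Finset.mul_sum]
      refine Finset.sum_congr rfl fun j _ => ?_
      rw [hmul]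
    simp only [this, hP]
    rw [Finset.sum_comm]
    refine Finset.sum_congr rfl fun i _ => ?_
    rw [Finset.sum_comm]
  have hcov : ∀ T T', P (T ∪ T') - P T * P T' ≤
      (if Disjoint T T' then 0 else p ^ (T ∪ T').card) := by
    intro T T'
    have hPn : ∀ T, 0 ≤ P T := fun T => Finset.sum_nonneg fun E _ =>
      mul_nonneg (bw_nonneg K p h0 h1 E) (by simp only [hind]; split_ifs <;> norm_num)
    split_ifs with hd
    · by_cases hT : T ∪ T' ⊆ K
      · have a1 := (Finset.union_subset_iff.1 hT).1
        have a2 := (Finset.union_subset_iff.1 hT).2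
        have e1 : P (T ∪ T') = _ := bw_sum_superset K _ p hT
        have e2 : P T = _ := bw_sum_superset K _ p a1
        have e3 : P T' = _ := bw_sum_superset K _ p a2
        rw [e1, e2, e3, Finset.card_union_of_disjoint hd, pow_add]; simp
      · have e1 : P (T ∪ T') = _ := bw_sum_superset_not K _ p hT
        rw [e1]
        have := mul_nonneg (hPn T) (hPn T')
        linarith
    · have e1 : P (T ∪ T') ≤ _ := bw_sum_superset_le K (T ∪ T') p h0
      have := mul_nonneg (hPn T) (hPn T')
      linarith
  have hVar : ∑ E ∈ K.powerset, bw K p E * (X E - μ) ^ 2 ≤ V := by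
    have e : ∑ E ∈ K.powerset, bw K p E * (X E - μ) ^ 2
        = ∑ i ∈ s, ∑ j ∈ s, (P (S i ∪ S j) - P (S i) * P (S j)) := by
      have e1 : ∑ E ∈ K.powerset, bw K p E * (X E - μ) ^ 2 =
          ∑ E ∈ K.powerset, bw K p E * (X E) ^ 2
          - 2 * μ * ∑ E ∈ K.powerset, bw K p E * X E + μ ^ 2 * ∑ E ∈ K.powerset, bw K p E := by
        clear_value μ
        rw [Finset.mul_sum, Finset.mul_sum, ← Finset.sum_sub_distrib, ← Finset.sum_add_distrib]
        exact Finset.sum_congr rfl fun E _ => by ring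
      rw [e1, hEX, hEX2, bw_sum]
      simp only [Finset.sum_sub_distrib]
      rw [← Finset.sum_mul_sum, ← hμ]
      ring
    rw [e]
    exact le_trans (Finset.sum_le_sum fun i _ => Finset.sum_le_sum fun j _ => hcov _ _) hvar
  have hcheb : m ^ 2 * ∑ E ∈ K.powerset.filter (fun E => ¬ X E ≤ 2 * m), bw K p E ≤ V := by
    refine le_trans ?_ hVar
    rw [Finset.mul_sum]
    refine le_trans (Finset.sum_le_sum (g := fun E => bw K p E * (X E - μ) ^ 2) ?_) ?_
    · intro E hE
      have hE' := (Finset.mem_filter.1 hE).2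
      push Not at hE'
      rw [mul_comm]
      refine mul_le_mul_of_nonneg_left ?_ (bw_nonneg K p h0 h1 E)
      exact pow_le_pow_left₀ hm.le (by linarith) 2
    · refine Finset.sum_le_sum_of_subset_of_nonneg (Finset.filter_subset _ _) ?_
      exact fun E _ _ => mul_nonneg (bw_nonneg K p h0 h1 E) (sq_nonneg _)
  have hsplit := Finset.sum_filter_add_sum_filter_not K.powerset (fun E => X E ≤ 2 * m) (bw K p)
  rw [bw_sum] at hsplit
  have : ∑ E ∈ K.powerset.filter (fun E => ¬ X E ≤ 2 * m), bw K p E ≤ δ := by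
    have h3 := hcheb.trans hV
    rw [mul_comm δ] at h3
    exact le_of_mul_le_mul_left h3 (by positivity)
  linarith

/-! ### Edge positions of the path -/

lemma edgeIdx_mem (k d x i y : ℕ) : y ∈ edgeIdx k d x i ↔ x + i * d ≤ y ∧ y < x + i * d + k := by
  unfold edgeIdx
  simp only [Finset.mem_image, Finset.mem_range]
  constructor
  · rintro ⟨j, hj, rfl⟩; omega
  · rintro ⟨h1, h2⟩; exact ⟨y - (x + i * d), by omega, by omega⟩

lemma card_biUnion_edgeIdx (ℓ d x : ℕ) (I : Finset ℕ) (hI : I.Nonempty) :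
    ℓ + I.card * d ≤ (I.biUnion (edgeIdx (ℓ + d) d x)).card := by
  induction I using Finset.induction_on_max with
  | empty => simp at hI
  | insert i I hlt ih =>
    have hni : i ∉ I := fun h => lt_irrefl _ (hlt i h)
    rw [Finset.card_insert_of_notMem hni]
    rcases I.eq_empty_or_nonempty with rfl | hne
    · simp only [Finset.card_empty, insert_empty_eq, Finset.singleton_biUnion]
      unfold edgeIdx
      rw [Finset.card_image_of_injective _ (fun a b h => by simpa using h)]
      simp
    · have h1 := ih hne
      have hsub : I.biUnion (edgeIdx (ℓ + d) d x) ∪ Finset.Ico (x + i * d + ℓ) (x + i * d + ℓ + d)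
          ⊆ (insert i I).biUnion (edgeIdx (ℓ + d) d x) := by
        rw [Finset.biUnion_insert]
        refine Finset.union_subset Finset.subset_union_right ?_
        refine Finset.Subset.trans ?_ Finset.subset_union_left
        intro y hy
        rw [Finset.mem_Ico] at hy
        rw [edgeIdx_mem]; omega
      have hdis : Disjoint (I.biUnion (edgeIdx (ℓ + d) d x))
          (Finset.Ico (x + i * d + ℓ) (x + i * d + ℓ + d)) := by
        rw [Finset.disjoint_left]
        intro y hy hy2
        rw [Finset.mem_Ico] at hy2
        obtain ⟨j, hj, hyj⟩ := Finset.mem_biUnion.1 hy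
        rw [edgeIdx_mem] at hyj
        have : (j + 1) * d ≤ i * d := Nat.mul_le_mul_right _ (hlt j hj)
        rw [add_mul] at this
        omega
      have h2 := Finset.card_le_card hsub
      rw [Finset.card_union_of_disjoint hdis, Nat.card_Ico] at h2
      rw [add_mul]
      omega

/-- Positions (in `Fin b`) of the `i`-th edge. -/
def eI (k d x b i : ℕ) : Finset (Fin b) :=
  Finset.univ.filter (fun m : Fin b => (m : ℕ) ∈ edgeIdx k d x i)

/-- Edge set of the labeled copy given by `w`. -/
noncomputable def ed (k d x a : ℕ) {n b : ℕ} (w : Fin b → Fin n) : Finset (Finset (Fin n)) :=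
  (Finset.range a).image (fun i => (eI k d x b i).image w)

lemma edge_inj (k d x a : ℕ) {n b : ℕ} (hd : 1 ≤ d) (hk : 1 ≤ k)
    (hb : ∀ i < a, x + i * d + k ≤ b)
    (w : Fin b → Fin n) (hw : Function.Injective w) :
    Set.InjOn (fun i => (eI k d x b i).image w) (Finset.range a : Set ℕ) := by
  have key : ∀ i j, i < a → i < j → (eI k d x b i).image w ≠ (eI k d x b j).image w := by
    intro i j hi hij h
    have h' := Finset.image_injective hw h
    have hlt : x + i * d < b := by have := hb i hi; omega
    have hmem : (⟨x + i * d, hlt⟩ : Fin b) ∈ eI k d x b i := by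
      simp only [eI, Finset.mem_filter, Finset.mem_univ, true_and, edgeIdx_mem]; omega
    rw [h'] at hmem
    simp only [eI, Finset.mem_filter, Finset.mem_univ, true_and, edgeIdx_mem] at hmem
    have : i * d < j * d := Nat.mul_lt_mul_of_pos_right hij hd
    omega
  intro i hi j hj h
  simp only [Finset.coe_range, Set.mem_Iio] at hi hj
  rcases lt_trichotomy i j with h1 | h1 | h1
  · exact absurd h (key i j hi h1)
  · exact h1
  · exact absurd h.symm (key j i hj h1)

lemma card_biUnion_eI (ℓ d x a b : ℕ) (hb : ∀ i < a, x + i * d + (ℓ + d) ≤ b)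
    (I : Finset ℕ) (hIa : I ⊆ Finset.range a) (hI : I.Nonempty) :
    ℓ + I.card * d ≤ (I.biUnion (eI (ℓ + d) d x b)).card := by
  refine (card_biUnion_edgeIdx ℓ d x I hI).trans ?_
  refine le_trans (Finset.card_le_card ?_)
    (Finset.card_image_le (s := I.biUnion (eI (ℓ + d) d x b)) (f := fun m : Fin b => (m : ℕ)))
  intro y hy
  obtain ⟨i, hi, hyi⟩ := Finset.mem_biUnion.1 hy
  have h1 := hb i (Finset.mem_range.1 (hIa hi))
  have h2 := (edgeIdx_mem _ _ _ _ _).1 hyi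
  refine Finset.mem_image.2 ⟨⟨y, by omega⟩, Finset.mem_biUnion.2 ⟨i, hi, ?_⟩, rfl⟩
  simp only [eI, Finset.mem_filter, Finset.mem_univ, true_and]
  exact hyi

lemma card_maps_into {n b : ℕ} (J : Finset (Fin b)) (U : Finset (Fin n)) :
    (Finset.univ.filter (fun w : Fin b → Fin n => ∀ j ∈ J, w j ∈ U)).card
      = U.card ^ J.card * n ^ (b - J.card) := by
  have : (Finset.univ.filter (fun w : Fin b → Fin n => ∀ j ∈ J, w j ∈ U))
      = Fintype.piFinset (fun j => if j ∈ J then U else Finset.univ) := by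
    ext w
    simp only [Finset.mem_filter, Finset.mem_univ, true_and, Fintype.mem_piFinset]
    refine forall_congr' fun j => ?_
    by_cases h : j ∈ J <;> simp [h]
  rw [this, Fintype.card_piFinset]
  have : ∀ j, (if j ∈ J then U else (Finset.univ : Finset (Fin n))).card
      = if j ∈ J then U.card else n := by
    intro j; split_ifs <;> simp
  simp only [this]
  rw [Finset.prod_ite]
  simp only [Finset.prod_const]
  have c1 : (Finset.univ.filter (fun j => j ∈ J)) = J := by ext; simp
  have c2 : (Finset.univ.filter (fun j => j ∉ J)) = Jᶜ := by ext; simp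
  rw [c1, c2, Finset.card_compl, Fintype.card_fin]

/-- Injective tuples meeting `U`. -/
noncomputable def meet (n b : ℕ) (U : Finset (Fin n)) : Finset (Fin b → Fin n) :=
  Finset.univ.filter (fun w => Function.Injective w ∧ ∃ m, w m ∈ U)

/-- Injective tuples. -/
noncomputable def injs (n b : ℕ) : Finset (Fin b → Fin n) :=
  Finset.univ.filter (fun w => Function.Injective w)

/-- Extension lemma: the total weight of extensions of a partial structure (vertices `U`, edges
`F` inside `U`) by a path meeting `U`. -/
lemma extension (ℓ d x a n b u : ℕ) (hd : 1 ≤ d) (hℓ : 1 ≤ ℓ) (hn : 1 ≤ n)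
    (hb : ∀ i < a, x + i * d + (ℓ + d) ≤ b) (hb2 : ℓ + a * d ≤ b)
    (p θ : ℝ) (hp : 0 ≤ p) (hθ : 0 ≤ θ)
    (H : ∀ t, 1 ≤ t → t ≤ a → (n : ℝ) ≤ θ * ((n : ℝ) ^ (ℓ + t * d) * p ^ t))
    (U : Finset (Fin n)) (hU : U.card ≤ u) (hu : 1 ≤ u) (F : Finset (Finset (Fin n)))
    (hF : ∀ e ∈ F, e ⊆ U) :
    ∑ w ∈ meet n b U, p ^ (ed (ℓ + d) d x a w \ F).card
      ≤ (b * u + 2 ^ a * (u : ℝ) ^ b * θ) * ((n : ℝ) ^ (b - 1) * p ^ a) := by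
  have hn0 : (0 : ℝ) < n := by exact_mod_cast hn
  have hn1 : (1 : ℝ) ≤ n := by exact_mod_cast hn
  have hu1 : (1 : ℝ) ≤ u := by exact_mod_cast hu
  set Iw : (Fin b → Fin n) → Finset ℕ := fun w =>
    (Finset.range a).filter (fun i => (eI (ℓ + d) d x b i).image w ∈ F) with hIw
  -- exponent
  have hexp : ∀ w ∈ meet n b U, (ed (ℓ + d) d x a w \ F).card = a - (Iw w).card := by
    intro w hw
    have hinj : Function.Injective w := (Finset.mem_filter.1 hw).2.1
    have hio := edge_inj (ℓ + d) d x a hd (by omega) hb w hinj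
    have : ed (ℓ + d) d x a w \ F
        = (Finset.range a \ Iw w).image (fun i => (eI (ℓ + d) d x b i).image w) := by
      ext e
      simp only [ed, hIw, Finset.mem_sdiff, Finset.mem_image, Finset.mem_filter]
      constructor
      · rintro ⟨⟨i, hi, rfl⟩, h2⟩
        exact ⟨i, ⟨hi, fun h => h2 h.2⟩, rfl⟩
      · rintro ⟨i, ⟨hi, h2⟩, rfl⟩
        exact ⟨⟨i, hi, rfl⟩, fun h => h2 ⟨hi, h⟩⟩
    rw [this, Finset.card_image_of_injOn, Finset.card_sdiff_of_subset (Finset.filter_subset _ _),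
      Finset.card_range]
    exact hio.mono (by simp)
  rw [Finset.sum_congr rfl (fun w hw => by rw [hexp w hw])]
  -- pointwise bound by a sum of indicators
  have hpt : ∀ w ∈ meet n b U, p ^ (a - (Iw w).card) ≤
      ∑ m : Fin b, (if ∀ j ∈ ({m} : Finset (Fin b)), w j ∈ U then p ^ a else 0) +
      ∑ I ∈ (Finset.range a).powerset.erase ∅,
        (if ∀ j ∈ I.biUnion (eI (ℓ + d) d x b), w j ∈ U then p ^ (a - I.card) else 0) := by
    intro w hw
    have hpa : ∀ r, 0 ≤ p ^ r := fun r => pow_nonneg hp r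
    have n1 : 0 ≤ ∑ m : Fin b, (if ∀ j ∈ ({m} : Finset (Fin b)), w j ∈ U then p ^ a else 0) :=
      Finset.sum_nonneg fun m _ => by split_ifs <;> simp [hpa]
    have n2 : 0 ≤ ∑ I ∈ (Finset.range a).powerset.erase ∅,
        (if ∀ j ∈ I.biUnion (eI (ℓ + d) d x b), w j ∈ U then p ^ (a - I.card) else 0) :=
      Finset.sum_nonneg fun m _ => by split_ifs <;> simp [hpa]
    rcases (Iw w).eq_empty_or_nonempty with he | hne
    · rw [he, Finset.card_empty, Nat.sub_zero]
      obtain ⟨m, hm⟩ := (Finset.mem_filter.1 hw).2.2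
      have := Finset.single_le_sum (s := Finset.univ)
        (f := fun m : Fin b => (if ∀ j ∈ ({m} : Finset (Fin b)), w j ∈ U then p ^ a else 0))
        (fun m _ => by split_ifs <;> simp [hpa]) (Finset.mem_univ m)
      simp only [Finset.mem_singleton, forall_eq, hm, if_true] at this
      simp only [Finset.mem_singleton, forall_eq] at n1 ⊢
      linarith
    · have hmem : Iw w ∈ (Finset.range a).powerset.erase ∅ := by
        rw [Finset.mem_erase, Finset.mem_powerset]
        exact ⟨hne.ne_empty, Finset.filter_subset _ _⟩
      have := Finset.single_le_sum (s := (Finset.range a).powerset.erase ∅)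
        (f := fun I => (if ∀ j ∈ I.biUnion (eI (ℓ + d) d x b), w j ∈ U
          then p ^ (a - I.card) else 0))
        (fun m _ => by split_ifs <;> simp [hpa]) hmem
      have hc : ∀ j ∈ (Iw w).biUnion (eI (ℓ + d) d x b), w j ∈ U := by
        intro j hj
        obtain ⟨i, hi, hji⟩ := Finset.mem_biUnion.1 hj
        exact hF _ (Finset.mem_filter.1 hi).2 (Finset.mem_image_of_mem w hji)
      simp only [if_pos hc] at this
      linarith
  refine (Finset.sum_le_sum hpt).trans ?_
  refine (Finset.sum_le_sum_of_subset_of_nonneg (Finset.filter_subset _ _) ?_).trans ?_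
  · intro w _ _
    refine add_nonneg ?_ ?_ <;>
    · refine Finset.sum_nonneg fun m _ => ?_
      split_ifs <;> positivity
  rw [Finset.sum_add_distrib, Finset.sum_comm, add_mul]
  rw [Finset.sum_comm (s := (Finset.univ : Finset (Fin b → Fin n)))
    (t := (Finset.range a).powerset.erase ∅)]
  have hcnt : ∀ (J : Finset (Fin b)) (c : ℝ),
      ∑ w : Fin b → Fin n, (if ∀ j ∈ J, w j ∈ U then c else 0)
        = ((U.card : ℝ) ^ J.card * (n : ℝ) ^ (b - J.card)) * c := by
    intro J c
    rw [← Finset.sum_filter, Finset.sum_const, card_maps_into, nsmul_eq_mul]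
    push_cast; ring
  have hUu : (U.card : ℝ) ≤ u := by exact_mod_cast hU
  refine add_le_add ?_ ?_
  · calc _ ≤ ∑ m : Fin b, (u : ℝ) * ((n : ℝ) ^ (b - 1) * p ^ a) := by
          refine Finset.sum_le_sum fun m _ => ?_
          rw [hcnt, Finset.card_singleton, pow_one, mul_assoc]
          exact mul_le_mul_of_nonneg_right hUu (by positivity)
      _ = _ := by simp; ring
  · calc _ ≤ ∑ I ∈ (Finset.range a).powerset.erase ∅,
            (u : ℝ) ^ b * (θ * ((n : ℝ) ^ (b - 1) * p ^ a)) := by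
          refine Finset.sum_le_sum fun I hI => ?_
          rw [hcnt]
          rw [Finset.mem_erase, Finset.mem_powerset] at hI
          have hne : I.Nonempty := Finset.nonempty_iff_ne_empty.2 hI.1
          have hJ := card_biUnion_eI ℓ d x a b hb I hI.2 hne
          have hJb : (I.biUnion (eI (ℓ + d) d x b)).card ≤ b := by
            simpa using Finset.card_le_univ (I.biUnion (eI (ℓ + d) d x b))
          have ht : I.card ≤ a := by simpa using Finset.card_le_card hI.2
          have ht1 : 1 ≤ I.card := hne.card_pos
          have hH := H I.card ht1 ht
          generalize (I.biUnion (eI (ℓ + d) d x b)).card = J at *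
          generalize I.card = t at *
          rw [mul_assoc]
          refine mul_le_mul ?_ ?_ (by positivity) (by positivity)
          · calc (U.card : ℝ) ^ J ≤ (u : ℝ) ^ J := pow_le_pow_left₀ (by positivity) hUu _
              _ ≤ (u : ℝ) ^ b := pow_le_pow_right₀ hu1 hJb
          · have s1 : (n : ℝ) ^ (b - J) * p ^ (a - t)
                ≤ (n : ℝ) ^ (b - (ℓ + t * d)) * p ^ (a - t) :=
              mul_le_mul_of_nonneg_right (pow_le_pow_right₀ hn1 (by omega)) (by positivity)
            refine s1.trans ?_
            refine le_of_mul_le_mul_right ?_ hn0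
            calc (n : ℝ) ^ (b - (ℓ + t * d)) * p ^ (a - t) * n
                ≤ (n : ℝ) ^ (b - (ℓ + t * d)) * p ^ (a - t)
                    * (θ * ((n : ℝ) ^ (ℓ + t * d) * p ^ t)) :=
                  mul_le_mul_of_nonneg_left hH (by positivity)
              _ = θ * (((n : ℝ) ^ (b - (ℓ + t * d)) * (n : ℝ) ^ (ℓ + t * d))
                    * (p ^ (a - t) * p ^ t)) := by ring
              _ = θ * ((n : ℝ) ^ (b - 1 + 1) * p ^ a) := by
                  rw [← pow_add, ← pow_add]
                  have t1 : t * d ≤ a * d := Nat.mul_le_mul_right _ ht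
                  have t2 : b - (ℓ + t * d) + (ℓ + t * d) = b - 1 + 1 := by omega
                  have t3 : a - t + t = a := by omega
                  rw [t2, t3]
              _ = _ := by rw [pow_succ]; ring
      _ ≤ _ := by
          rw [Finset.sum_const, nsmul_eq_mul]
          have hc : (((Finset.range a).powerset.erase ∅).card : ℝ) ≤ 2 ^ a := by
            have := Finset.card_erase_le (s := (Finset.range a).powerset) (a := ∅)
            rw [Finset.card_powerset, Finset.card_range] at this
            exact_mod_cast this
          calc _ ≤ (2 : ℝ) ^ a * ((u : ℝ) ^ b * (θ * ((n : ℝ) ^ (b - 1) * p ^ a))) :=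
                mul_le_mul_of_nonneg_right hc (by positivity)
            _ = _ := by ring

/-- Vertex set of a tuple. -/
def im {n b : ℕ} (w : Fin b → Fin n) : Finset (Fin n) := Finset.univ.image w

lemma card_im_le {n b : ℕ} (w : Fin b → Fin n) : (im w).card ≤ b := by
  have := Finset.card_image_le (s := (Finset.univ : Finset (Fin b))) (f := w)
  simpa [im] using this

lemma ed_sub (k d x a : ℕ) {n b : ℕ} (w : Fin b → Fin n) :
    ∀ e ∈ ed k d x a w, e ⊆ im w := by
  intro e he
  obtain ⟨i, _, rfl⟩ := Finset.mem_image.1 he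
  exact Finset.image_subset_image (Finset.subset_univ _)

/-- Overlapping pairs of injective tuples. -/
noncomputable def prs (n b : ℕ) : Finset ((Fin b → Fin n) × (Fin b → Fin n)) :=
  Finset.univ.filter (fun ww => Function.Injective ww.1 ∧ Function.Injective ww.2 ∧
    ∃ m m' : Fin b, ww.1 m = ww.2 m')

lemma mem_prs {n b : ℕ} (ww : (Fin b → Fin n) × (Fin b → Fin n)) :
    ww ∈ prs n b ↔ ww.1 ∈ injs n b ∧ ww.2 ∈ meet n b (im ww.1) := by
  simp only [prs, injs, meet, im, Finset.mem_filter, Finset.mem_univ, true_and, Finset.mem_image]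
  constructor
  · rintro ⟨h1, h2, m, m', h⟩; exact ⟨h1, h2, m', m, h⟩
  · rintro ⟨h1, h2, m', m, h⟩; exact ⟨h1, h2, m, m', h⟩

lemma mem_prs' {n b : ℕ} (ww : (Fin b → Fin n) × (Fin b → Fin n)) :
    ww ∈ prs n b ↔ ww.2 ∈ injs n b ∧ ww.1 ∈ meet n b (im ww.2) := by
  simp only [prs, injs, meet, im, Finset.mem_filter, Finset.mem_univ, true_and, Finset.mem_image]
  constructor
  · rintro ⟨h1, h2, m, m', h⟩; exact ⟨h2, h1, m, m', h.symm⟩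
  · rintro ⟨h2, h1, m, m', h⟩; exact ⟨h1, h2, m, m', h.symm⟩

lemma card_union_sdiff' {α : Type*} [DecidableEq α] (A B F : Finset α) :
    ((A ∪ B) \ F).card = (A \ F).card + (B \ (F ∪ A)).card := by
  rw [← Finset.card_union_of_disjoint]
  · congr 1
    ext y
    simp only [Finset.mem_sdiff, Finset.mem_union]
    tauto
  · rw [Finset.disjoint_left]
    intro y
    simp only [Finset.mem_sdiff, Finset.mem_union]
    tauto

lemma card_union' {α : Type*} [DecidableEq α] (A F : Finset α) :
    (F ∪ A).card = F.card + (A \ F).card := by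
  rw [Finset.union_comm, ← Finset.card_sdiff_add_card A F, add_comm]

lemma ed_card (k d x a : ℕ) {n b : ℕ} (hd : 1 ≤ d) (hk : 1 ≤ k)
    (hb : ∀ i < a, x + i * d + k ≤ b)
    (w : Fin b → Fin n) (hw : Function.Injective w) : (ed k d x a w).card = a := by
  unfold ed
  rw [Finset.card_image_of_injOn (edge_inj k d x a hd hk hb w hw), Finset.card_range]

lemma meet_mono {n b : ℕ} {U U' : Finset (Fin n)} (h : U ⊆ U') : meet n b U ⊆ meet n b U' := by
  intro w hw
  simp only [meet, Finset.mem_filter, Finset.mem_univ, true_and] at hw ⊢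
  exact ⟨hw.1, hw.2.choose, h hw.2.choose_spec⟩


lemma mean_bound (ℓ d x a n b : ℕ) (hd : 1 ≤ d) (hℓ : 1 ≤ ℓ) (hn : 1 ≤ n) (hb1 : 1 ≤ b)
    (hb : ∀ i < a, x + i * d + (ℓ + d) ≤ b) (hb2 : ℓ + a * d ≤ b)
    (p θ : ℝ) (hp : 0 ≤ p) (hθ : 0 ≤ θ)
    (H : ∀ t, 1 ≤ t → t ≤ a → (n : ℝ) ≤ θ * ((n : ℝ) ^ (ℓ + t * d) * p ^ t)) :
    ∑ i ∈ prs n b, p ^ (ed (ℓ + d) d x a i.1 ∪ ed (ℓ + d) d x a i.2).card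
      ≤ ((n : ℝ) ^ b * p ^ a) *
        ((b * b + 2 ^ a * (b : ℝ) ^ b * θ) * ((n : ℝ) ^ (b - 1) * p ^ a)) := by
  rw [Finset.sum_finset_product (prs n b) (injs n b) (fun w => meet n b (im w)) mem_prs]
  have hstep : ∀ w ∈ injs n b, ∑ w' ∈ meet n b (im w),
      p ^ (ed (ℓ + d) d x a w ∪ ed (ℓ + d) d x a w').card ≤
      p ^ a * ((b * b + 2 ^ a * (b : ℝ) ^ b * θ) * ((n : ℝ) ^ (b - 1) * p ^ a)) := by
    intro w hw
    have hc := ed_card (ℓ + d) d x a hd (by omega) hb w (Finset.mem_filter.1 hw).2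
    simp only [card_union', pow_add, hc]
    rw [← Finset.mul_sum]
    refine mul_le_mul_of_nonneg_left ?_ (by positivity)
    exact extension ℓ d x a n b b hd hℓ hn hb hb2 p θ hp hθ H (im w) (card_im_le w) hb1 _
      (ed_sub _ _ _ _ w)
  refine (Finset.sum_le_sum hstep).trans ?_
  rw [Finset.sum_const, nsmul_eq_mul, ← mul_assoc]
  refine mul_le_mul_of_nonneg_right ?_ (by positivity)
  refine mul_le_mul_of_nonneg_right ?_ (by positivity)
  have : (injs n b).card ≤ n ^ b := by
    simpa using Finset.card_le_univ (injs n b)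
  exact_mod_cast this

lemma ext_two (ℓ d x a n b u : ℕ) (hd : 1 ≤ d) (hℓ : 1 ≤ ℓ) (hn : 1 ≤ n) (hb1 : 1 ≤ b)
    (hb : ∀ i < a, x + i * d + (ℓ + d) ≤ b) (hb2 : ℓ + a * d ≤ b)
    (p θ : ℝ) (hp : 0 ≤ p) (hθ : 0 ≤ θ)
    (H : ∀ t, 1 ≤ t → t ≤ a → (n : ℝ) ≤ θ * ((n : ℝ) ^ (ℓ + t * d) * p ^ t))
    (U : Finset (Fin n)) (hU : U.card + b ≤ u) (F : Finset (Finset (Fin n)))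
    (hF : ∀ e ∈ F, e ⊆ U) :
    ∑ w ∈ meet n b U, ∑ w' ∈ meet n b (im w),
      p ^ ((ed (ℓ + d) d x a w ∪ ed (ℓ + d) d x a w') \ F).card
      ≤ ((b * u + 2 ^ a * (u : ℝ) ^ b * θ) * ((n : ℝ) ^ (b - 1) * p ^ a)) ^ 2 := by
  set Q := (b * u + 2 ^ a * (u : ℝ) ^ b * θ) * ((n : ℝ) ^ (b - 1) * p ^ a) with hQ
  have hQ0 : 0 ≤ Q := by positivity
  have hstep : ∀ w ∈ meet n b U, ∑ w' ∈ meet n b (im w),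
      p ^ ((ed (ℓ + d) d x a w ∪ ed (ℓ + d) d x a w') \ F).card
      ≤ p ^ (ed (ℓ + d) d x a w \ F).card * Q := by
    intro w _
    simp only [card_union_sdiff', pow_add]
    rw [← Finset.mul_sum]
    refine mul_le_mul_of_nonneg_left ?_ (by positivity)
    refine (Finset.sum_le_sum_of_subset_of_nonneg
      (meet_mono (Finset.subset_union_right (s₁ := U))) (fun _ _ _ => by positivity)).trans ?_
    refine extension ℓ d x a n b u hd hℓ hn hb hb2 p θ hp hθ H (U ∪ im w) ?_ (by omega) _ ?_
    · have := Finset.card_union_le U (im w)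
      have := card_im_le w
      omega
    · intro e he
      rcases Finset.mem_union.1 he with h | h
      · exact (hF e h).trans Finset.subset_union_left
      · exact (ed_sub _ _ _ _ w e h).trans Finset.subset_union_right
  refine (Finset.sum_le_sum hstep).trans ?_
  rw [← Finset.sum_mul, sq]
  refine mul_le_mul_of_nonneg_right ?_ hQ0
  exact extension ℓ d x a n b u hd hℓ hn hb hb2 p θ hp hθ H U (by omega) (by omega) F hF

lemma var_inner (ℓ d x a n b u : ℕ) (hd : 1 ≤ d) (hℓ : 1 ≤ ℓ) (hn : 1 ≤ n) (hb1 : 1 ≤ b)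
    (hb : ∀ i < a, x + i * d + (ℓ + d) ≤ b) (hb2 : ℓ + a * d ≤ b)
    (p θ : ℝ) (hp : 0 ≤ p) (hθ : 0 ≤ θ)
    (H : ∀ t, 1 ≤ t → t ≤ a → (n : ℝ) ≤ θ * ((n : ℝ) ^ (ℓ + t * d) * p ^ t))
    (U : Finset (Fin n)) (hU : U.card + b ≤ u) (F : Finset (Finset (Fin n)))
    (hF : ∀ e ∈ F, e ⊆ U) :
    ∑ j ∈ prs n b, (if Disjoint F (ed (ℓ + d) d x a j.1 ∪ ed (ℓ + d) d x a j.2) then 0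
      else p ^ (F ∪ (ed (ℓ + d) d x a j.1 ∪ ed (ℓ + d) d x a j.2)).card)
      ≤ p ^ F.card *
        (2 * ((b * u + 2 ^ a * (u : ℝ) ^ b * θ) * ((n : ℝ) ^ (b - 1) * p ^ a)) ^ 2) := by
  set f : (Fin b → Fin n) × (Fin b → Fin n) → ℝ := fun j =>
    p ^ ((ed (ℓ + d) d x a j.1 ∪ ed (ℓ + d) d x a j.2) \ F).card with hf
  have hf0 : ∀ j, 0 ≤ f j := fun j => by positivity
  have hmeet : ∀ w : Fin b → Fin n, Function.Injective w → ∀ e ∈ F, e ∈ ed (ℓ + d) d x a w →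
      w ∈ meet n b U := by
    intro w hw e he hew
    obtain ⟨i, hi, rfl⟩ := Finset.mem_image.1 hew
    rw [Finset.mem_range] at hi
    have hlt : x + i * d < b := by have := hb i hi; omega
    simp only [meet, Finset.mem_filter, Finset.mem_univ, true_and]
    refine ⟨hw, ⟨x + i * d, hlt⟩, hF _ he (Finset.mem_image_of_mem w ?_)⟩
    simp only [eI, Finset.mem_filter, Finset.mem_univ, true_and, edgeIdx_mem]; omega
  have hpt : ∀ j ∈ prs n b,
      (if Disjoint F (ed (ℓ + d) d x a j.1 ∪ ed (ℓ + d) d x a j.2) then 0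
      else p ^ (F ∪ (ed (ℓ + d) d x a j.1 ∪ ed (ℓ + d) d x a j.2)).card) ≤
      p ^ F.card * ((if j.1 ∈ meet n b U then f j else 0) +
        (if j.2 ∈ meet n b U then f j else 0)) := by
    intro j hj
    have hpF : 0 ≤ p ^ F.card := by positivity
    split_ifs with h1 h2 h3 h3 h2 h3
    · exact mul_nonneg hpF (add_nonneg (hf0 _) (hf0 _))
    · exact mul_nonneg hpF (add_nonneg (hf0 _) le_rfl)
    · exact mul_nonneg hpF (add_nonneg le_rfl (hf0 _))
    · simp
    · rw [card_union', pow_add]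
      exact mul_le_mul_of_nonneg_left (by have := hf0 j; simp only [hf] at this ⊢; linarith) hpF
    · rw [card_union', pow_add]
      exact mul_le_mul_of_nonneg_left (by simp [hf]) hpF
    · rw [card_union', pow_add]
      exact mul_le_mul_of_nonneg_left (by simp [hf]) hpF
    · exfalso
      rw [Finset.not_disjoint_iff] at h1
      obtain ⟨e, heF, he⟩ := h1
      have hj' := (Finset.mem_filter.1 hj).2
      rcases Finset.mem_union.1 he with h | h
      · exact absurd (hmeet _ hj'.1 e heF h) (by assumption)
      · exact absurd (hmeet _ hj'.2.1 e heF h) (by assumption)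
  refine (Finset.sum_le_sum hpt).trans ?_
  rw [← Finset.mul_sum]
  refine mul_le_mul_of_nonneg_left ?_ (by positivity)
  have hinj : ∀ w, w ∈ meet n b U → w ∈ injs n b := by
    intro w hw
    simp only [meet, injs, Finset.mem_filter, Finset.mem_univ, true_and] at hw ⊢
    exact hw.1
  have hE := ext_two ℓ d x a n b u hd hℓ hn hb1 hb hb2 p θ hp hθ H U hU F hF
  rw [Finset.sum_add_distrib, ← Finset.sum_filter, ← Finset.sum_filter, two_mul]
  refine add_le_add ?_ ?_
  · rw [Finset.sum_finset_product _ (meet n b U) (fun w => meet n b (im w))]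
    · exact hE
    · intro j
      rw [Finset.mem_filter, mem_prs]
      exact ⟨fun h => ⟨h.2, h.1.2⟩, fun h => ⟨⟨hinj _ h.1, h.2⟩, h.1⟩⟩
  · rw [Finset.sum_finset_product_right _ (meet n b U) (fun w => meet n b (im w))]
    · simp only [hf]
      refine le_trans (le_of_eq ?_) hE
      refine Finset.sum_congr rfl fun w _ => Finset.sum_congr rfl fun w' _ => ?_
      rw [Finset.union_comm (ed (ℓ + d) d x a w')]
    · intro j
      rw [Finset.mem_filter, mem_prs']
      exact ⟨fun h => ⟨h.2, h.1.2⟩, fun h => ⟨⟨hinj _ h.1, h.2⟩, h.1⟩⟩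


lemma pax_count (n k ℓ a x b : ℕ) (E : Finset (Finset (Fin n))) :
    paxOverlapPairCount n k ℓ a x b E = ((prs n b).filter (fun i =>
      ed k (k - ℓ) x a i.1 ∪ ed k (k - ℓ) x a i.2 ⊆ E)).card := by
  unfold paxOverlapPairCount prs
  rw [Finset.filter_filter]
  congr 1
  ext ww
  have hs : ∀ w : Fin b → Fin n, SpansPax k ℓ a x E w ↔
      Function.Injective w ∧ ed k (k - ℓ) x a w ⊆ E := by
    intro w
    unfold SpansPax ed eI
    refine and_congr_right fun _ => ?_
    simp [Finset.image_subset_iff]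
  simp only [Finset.mem_filter, Finset.mem_univ, true_and, hs, Finset.union_subset_iff]
  tauto

/-- The core estimate under the density hypothesis `H`. -/
lemma core (ℓ d x a n b : ℕ) (hd : 1 ≤ d) (hℓ : 1 ≤ ℓ) (hn : 1 ≤ n) (hb1 : 1 ≤ b) (ha : 1 ≤ a)
    (hb : ∀ i < a, x + i * d + (ℓ + d) ≤ b) (hb2 : ℓ + a * d ≤ b)
    (p θ δ : ℝ) (hp : 0 ≤ p) (hp1 : p ≤ 1) (hθ : 0 ≤ θ)
    (hθ1 : 2 ^ a * (b : ℝ) ^ b * θ ≤ 1)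
    (H : ∀ t, 1 ≤ t → t ≤ a → (n : ℝ) ≤ θ * ((n : ℝ) ^ (ℓ + t * d) * p ^ t))
    (hK : (b * (3 * b : ℕ) + 2 ^ a * ((3 * b : ℕ) : ℝ) ^ b * θ) ^ 2 ≤ δ * n) :
    1 - δ ≤ gProb n (ℓ + d) p (fun E =>
      (paxOverlapPairCount n (ℓ + d) ℓ a x b E : ℝ) ≤
        4 * (b : ℝ) ^ 2 * (n : ℝ) ^ (2 * b - 1) * p ^ (2 * a)) := by
  have hn0 : (0 : ℝ) < n := by exact_mod_cast hn
  have hb0 : (1 : ℝ) ≤ b := by exact_mod_cast hb1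
  have hp0 : 0 < p := by
    rcases hp.lt_or_eq with h | h
    · exact h
    · exfalso
      have := H 1 le_rfl ha
      rw [← h] at this
      simp at this
      omega
  set N := (n : ℝ) ^ (b - 1) * p ^ a with hN
  have hN0 : 0 < N := by positivity
  set m := 2 * (b : ℝ) ^ 2 * (n : ℝ) ^ (2 * b - 1) * p ^ (2 * a) with hm
  have hmN : m = 2 * (b : ℝ) ^ 2 * n * N ^ 2 := by
    have : 2 * b - 1 = (b - 1) + (b - 1) + 1 := by omega
    rw [hm, hN, this, two_mul a]; ring
  have hnb : (n : ℝ) ^ b * p ^ a = n * N := by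
    have : b = b - 1 + 1 := by omega
    rw [hN, this]
    simp only [Nat.add_sub_cancel]
    ring
  have hm0 : 0 < m := by positivity
  set K := (b * (3 * b : ℕ) + 2 ^ a * ((3 * b : ℕ) : ℝ) ^ b * θ) with hKdef
  have hmean : ∑ i ∈ prs n b, p ^ (ed (ℓ + d) d x a i.1 ∪ ed (ℓ + d) d x a i.2).card ≤ m := by
    refine (mean_bound ℓ d x a n b hd hℓ hn hb1 hb hb2 p θ hp hθ H).trans ?_
    rw [hnb, hmN]
    have : b * b + 2 ^ a * (b : ℝ) ^ b * θ ≤ 2 * (b : ℝ) ^ 2 := by nlinarith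
    calc (n : ℝ) * N * ((b * b + 2 ^ a * (b : ℝ) ^ b * θ) * N)
        ≤ (n : ℝ) * N * ((2 * (b : ℝ) ^ 2) * N) := by gcongr
      _ = _ := by ring
  have key := second_moment (kSets n (ℓ + d)) p hp hp1 (prs n b)
    (fun i => ed (ℓ + d) d x a i.1 ∪ ed (ℓ + d) d x a i.2) m (m * (2 * (K * N) ^ 2)) δ hm0 hmean
    ?_ ?_
  · unfold gProb
    have e : 4 * (b : ℝ) ^ 2 * (n : ℝ) ^ (2 * b - 1) * p ^ (2 * a) = 2 * m := by rw [hm]; ring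
    simp only [e, pax_count, Nat.add_sub_cancel_left]
    exact key
  · refine le_trans (Finset.sum_le_sum fun i _ => ?_)
      (le_trans (Finset.sum_mul _ _ _).symm.le (mul_le_mul_of_nonneg_right hmean (by positivity)))
    refine var_inner ℓ d x a n b (3 * b) hd hℓ hn hb1 hb hb2 p θ hp hθ H (im i.1 ∪ im i.2) ?_ _ ?_
    · have := Finset.card_union_le (im i.1) (im i.2)
      have := card_im_le i.1
      have := card_im_le i.2
      omega
    · intro e he
      rcases Finset.mem_union.1 he with h | h
      · exact (ed_sub _ _ _ _ _ e h).trans Finset.subset_union_left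
      · exact (ed_sub _ _ _ _ _ e h).trans Finset.subset_union_right
  · have h1 : 2 * (K * N) ^ 2 ≤ δ * m := by
      rw [hmN]
      have hδ : 0 ≤ δ * n := le_trans (sq_nonneg _) hK
      calc 2 * (K * N) ^ 2 = 2 * N ^ 2 * K ^ 2 := by ring
        _ ≤ 2 * N ^ 2 * (δ * n) := by gcongr
        _ = 2 * N ^ 2 * (δ * n) * 1 := by ring
        _ ≤ 2 * N ^ 2 * (δ * n) * (b : ℝ) ^ 2 := by
            gcongr
            exact one_le_pow₀ hb0
        _ = _ := by ring
    calc m * (2 * (K * N) ^ 2) ≤ m * (δ * m) := by gcongr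
      _ = _ := by ring

/-- Lemma 2.2(3). With probability `1 - o(1)`, `G^{(k)}(n,p)` contains at
most `4 b² n^{2b-1} p^{2a}` pairs of overlapping copies of `P_{a,x}`. -/
theorem few_overlapping_pax_pairs
    (k ℓ a x : ℕ) (hk : 3 ≤ k) (hl1 : 1 ≤ ℓ) (hlk : ℓ ≤ k - 1)
    (ha : 1 ≤ a) (hx : x ≤ k)
    (ε : ℝ) (hε0 : 0 < ε) (hε : ε ≤ (ℓ : ℝ) / (3 * (a : ℝ)))
    (γ : ℝ) (hγ : 0 < γ) :
    ∃ C₀ : ℕ, ∀ C : ℕ, C₀ ≤ C →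
      ∀ δ : ℝ, 0 < δ → ∃ n₀ : ℕ, ∀ n : ℕ, n₀ ≤ n →
        ∀ p : ℝ, 0 ≤ p → p ≤ 1 →
          ((2 ≤ ℓ → (n : ℝ) ^ (-((k : ℝ) - (ℓ : ℝ)) - ε) ≤ p) ∧
           (ℓ = 1 → (C : ℝ) * (n : ℝ) ^ (-((k : ℝ) - 1)) ≤ p)) →
          1 - δ ≤ gProb n k p (fun E =>
            (paxOverlapPairCount n k ℓ a x (2 * x + ℓ + (k - ℓ) * a) E : ℝ) ≤
              4 * ((2 * x + ℓ + (k - ℓ) * a : ℕ) : ℝ) ^ 2 *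
                (n : ℝ) ^ (2 * (2 * x + ℓ + (k - ℓ) * a) - 1) * p ^ (2 * a)) := by
  obtain ⟨d, rfl⟩ : ∃ d, k = ℓ + d := ⟨k - ℓ, by omega⟩
  have hd : 1 ≤ d := by omega
  simp only [Nat.add_sub_cancel_left]
  set b := 2 * x + ℓ + d * a with hbdef
  have hb1 : 1 ≤ b := by omega
  have hb : ∀ i < a, x + i * d + (ℓ + d) ≤ b := by
    intro i hi
    have : (i + 1) * d ≤ a * d := Nat.mul_le_mul_right _ hi
    rw [add_mul, mul_comm a] at this
    omega
  have hb2 : ℓ + a * d ≤ b := by rw [mul_comm a]; omega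
  clear_value b
  set Q : ℕ := 2 ^ a * b ^ b with hQ
  have hQ1 : 1 ≤ Q := Nat.mul_pos (by positivity) (by positivity)
  have hQr : (1 : ℝ) ≤ Q := by exact_mod_cast hQ1
  set θ : ℝ := 1 / Q with hθ
  have hθ0 : 0 < θ := by positivity
  refine ⟨Q, fun C hC δ hδ => ?_⟩
  set K := (b * (3 * b : ℕ) + 2 ^ a * ((3 * b : ℕ) : ℝ) ^ b * θ) with hK
  refine ⟨max (max 1 (Q ^ 3)) ⌈K ^ 2 / δ⌉₊, fun n hn p hp hp1 hpp => ?_⟩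
  have hn1 : 1 ≤ n := le_trans (le_trans (le_max_left _ _) (le_max_left _ _)) hn
  have hnQ : Q ^ 3 ≤ n := le_trans (le_trans (le_max_right _ _) (le_max_left _ _)) hn
  have hnK : K ^ 2 / δ ≤ n := (Nat.le_ceil _).trans (by exact_mod_cast le_trans (le_max_right _ _) hn)
  have hn0 : (0 : ℝ) < n := by exact_mod_cast hn1
  have hn1r : (1 : ℝ) ≤ n := by exact_mod_cast hn1
  refine core ℓ d x a n b hd hl1 hn1 hb1 ha hb hb2 p θ δ hp hp1 hθ0.le ?_ ?_ ?_
  · rw [hθ, hQ]; push_cast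
    rw [mul_one_div, div_self]
    have : (0 : ℝ) < b := by exact_mod_cast hb1
    positivity
  · intro t ht hta
    have hdc : ((ℓ + d : ℕ) : ℝ) - ℓ = d := by push_cast; ring
    suffices h : (Q : ℝ) * n ≤ (n : ℝ) ^ (ℓ + t * d) * p ^ t by
      rw [hθ, one_div, ← div_eq_inv_mul, le_div_iff₀ (by linarith)]
      linarith
    rcases Nat.lt_or_ge 1 ℓ with h2 | h2
    · have hpl := hpp.1 h2
      rw [hdc] at hpl
      have e1 : ((n : ℝ) ^ (-(d : ℝ) - ε)) ^ t ≤ p ^ t :=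
        pow_le_pow_left₀ (by positivity) hpl t
      have hεt : ε * t ≤ ℓ / 3 := by
        have hapos : (0 : ℝ) < a := by exact_mod_cast ha
        have h3 : (t : ℝ) ≤ a := by exact_mod_cast hta
        calc ε * t ≤ (ℓ : ℝ) / (3 * a) * a := by gcongr
          _ = ℓ / 3 := by field_simp
      have hl2 : (2 : ℝ) ≤ ℓ := by exact_mod_cast h2
      have e2 : (n : ℝ) ^ ((4 : ℝ) / 3) ≤ (n : ℝ) ^ (ℓ + t * d) * ((n : ℝ) ^ (-(d : ℝ) - ε)) ^ t := by
        rw [← Real.rpow_natCast (n : ℝ) (ℓ + t * d), ← Real.rpow_natCast _ t,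
          ← Real.rpow_mul hn0.le, ← Real.rpow_add hn0]
        refine Real.rpow_le_rpow_of_exponent_le hn1r ?_
        push_cast
        nlinarith
      have e3 : (Q : ℝ) * n ≤ (n : ℝ) ^ ((4 : ℝ) / 3) := by
        have : (n : ℝ) ^ ((4 : ℝ) / 3) = (n : ℝ) ^ ((1 : ℝ) / 3) * n := by
          rw [← Real.rpow_add_one hn0.ne']; norm_num
        rw [this]
        refine mul_le_mul_of_nonneg_right ?_ hn0.le
        have h4 : ((Q : ℝ) ^ 3) ≤ n := by exact_mod_cast hnQ
        calc (Q : ℝ) = ((Q : ℝ) ^ 3) ^ ((1 : ℝ) / 3) := by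
              rw [← Real.rpow_natCast, ← Real.rpow_mul (by positivity)]; norm_num
          _ ≤ _ := Real.rpow_le_rpow (by positivity) h4 (by norm_num)
      exact e3.trans (e2.trans (mul_le_mul_of_nonneg_left e1 (by positivity)))
    · have hl : ℓ = 1 := by omega
      subst hl
      have hpl := hpp.2 rfl
      have hdc' : ((1 + d : ℕ) : ℝ) - 1 = d := by push_cast; ring
      rw [hdc', Real.rpow_neg hn0.le, Real.rpow_natCast] at hpl
      have hCQ : (Q : ℝ) ≤ C := by exact_mod_cast hC
      have e1 : (Q : ℝ) ≤ (n : ℝ) ^ d * p := by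
        have : (C : ℝ) ≤ (n : ℝ) ^ d * p := by
          rw [← div_eq_mul_inv, div_le_iff₀ (by positivity)] at hpl
          linarith
        linarith
      have e2 : (Q : ℝ) ≤ ((n : ℝ) ^ d * p) ^ t :=
        e1.trans (le_self_pow₀ (hQr.trans e1) (by omega))
      calc (Q : ℝ) * n ≤ ((n : ℝ) ^ d * p) ^ t * n := by gcongr
        _ = _ := by rw [mul_pow, ← pow_mul, pow_add, pow_one, mul_comm d t]; ring
  · rw [div_le_iff₀ hδ] at hnK
    linarith
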